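/- arXiv:2111.14590 — 3 statements merged into one kernel-verified Lean document; each statement's English description precedes it below -/
import Mathlib

section
/- Let T ≥ 2 and p ≥ 1 be integers and let V̂₁, …, V̂_T be vectors in ℝ^p whose partial sums Ŝ_t = Σ_{j=1}^t V̂_j satisfy Ŝ_T = 0. For the Bartlett kernel K_BT(x) = 1 − |x| for |x| ≤ 1 and K_BT(x) = 0 otherwise, the fixed-b long-run variance estimator collapses to an average of outer products of partial sums: T^{-1} Σ_{i=1}^{T} Σ_{j=1}^{T} K_BT((i−j)/T) V̂_i V̂_j′ = 2 T^{-2} Σ_{i=1}^{T−1} Ŝ_i Ŝ_i′. -/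
open Finset

/-- The Bartlett kernel: `K_BT x = 1 − |x|` for `|x| ≤ 1` and `0` otherwise. -/
noncomputable def bartlettKernel (x : ℝ) : ℝ := if |x| ≤ 1 then 1 - |x| else 0

/-!
Up to terms depending on `i` alone or on `j` alone, the weight `1 - |i - j| / T` is
`(2 / T) * (T - max i j)`. Such terms contribute nothing when the scores sum to zero, and
`T - max i j` counts the times `t < T` at which both `V i` and `V j` have entered the partial sum.
-/

section BilinearSums

variable {R M N P : Type*} [CommSemiring R] [AddCommMonoid M] [AddCommMonoid N] [AddCommMonoid P]
  [Module R M] [Module R N] [Module R P] (B : M →ₗ[R] N →ₗ[R] P)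

lemma sum_sum_sub_max_nsmul_eq_sum_partial_sums (v : ℕ → M) (w : ℕ → N) (n : ℕ) :
    ∑ i ∈ Icc 1 n, ∑ j ∈ Icc 1 n, (n - max i j) • B (v i) (w j)
      = ∑ t ∈ Icc 1 (n - 1), B (∑ i ∈ Icc 1 t, v i) (∑ j ∈ Icc 1 t, w j) := by
  have swap : ∀ (t : ℕ) (q : ℕ × ℕ), t ∈ Icc 1 (n - 1) ∧ q ∈ Icc 1 t ×ˢ Icc 1 t ↔
      t ∈ Ico (max q.1 q.2) n ∧ q ∈ Icc 1 n ×ˢ Icc 1 n := fun t q => by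
    simp only [mem_product, mem_Icc, mem_Ico]
    omega
  calc ∑ i ∈ Icc 1 n, ∑ j ∈ Icc 1 n, (n - max i j) • B (v i) (w j)
      = ∑ q ∈ Icc 1 n ×ˢ Icc 1 n, ∑ _t ∈ Ico (max q.1 q.2) n, B (v q.1) (w q.2) := by
        simp only [sum_product, sum_const, Nat.card_Ico]
    _ = ∑ t ∈ Icc 1 (n - 1), ∑ q ∈ Icc 1 t ×ˢ Icc 1 t, B (v q.1) (w q.2) :=
        (sum_comm' swap).symm
    _ = ∑ t ∈ Icc 1 (n - 1), B (∑ i ∈ Icc 1 t, v i) (∑ j ∈ Icc 1 t, w j) := by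
        simp only [sum_product, LinearMap.map_sum₂]
        simp only [map_sum]

lemma sum_sum_add_smul_eq_zero {ι κ : Type*} {s : Finset ι} {t : Finset κ} {v : ι → M}
    {w : κ → N} (hv : ∑ i ∈ s, v i = 0) (hw : ∑ j ∈ t, w j = 0) (f : ι → R) (g : κ → R) :
    ∑ i ∈ s, ∑ j ∈ t, (f i + g j) • B (v i) (w j) = 0 := by
  calc ∑ i ∈ s, ∑ j ∈ t, (f i + g j) • B (v i) (w j)
      = B (∑ i ∈ s, f i • v i) (∑ j ∈ t, w j) + B (∑ i ∈ s, v i) (∑ j ∈ t, g j • w j) := by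
        simp only [LinearMap.map_sum₂, LinearMap.map_smul₂, add_smul, sum_add_distrib]
        simp only [map_sum, map_smul, smul_sum]
    _ = 0 := by simp only [hv, hw, map_zero, LinearMap.zero_apply, add_zero]

end BilinearSums

lemma bartlettKernel_div_of_abs_le {x T : ℝ} (hx : |x| ≤ T) :
    bartlettKernel (x / T) = 1 - |x| / T := by
  have hT : 0 ≤ T := (abs_nonneg x).trans hx
  rw [bartlettKernel, abs_div, abs_of_nonneg hT, if_pos (div_le_one_of_le₀ hx hT)]

lemma bartlettKernel_sub_div_eq_sub_max {x y T : ℝ} (hT : 0 < T) (hxy : |x - y| ≤ T) :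
    bartlettKernel ((x - y) / T) = 2 * T⁻¹ * (T - max x y) + ((x / T - 1) + y / T) := by
  have abs_eq : |x - y| = 2 * max x y - x - y := by
    linarith [max_sub_min_eq_abs' x y, max_add_min x y]
  rw [bartlettKernel_div_of_abs_le hxy, abs_eq]
  field_simp
  ring

theorem bartlett_fixed_b_eq_sum_outer_partial_sums_general {E F G : Type*}
    [AddCommMonoid E] [AddCommMonoid F] [AddCommMonoid G] [Module ℝ E] [Module ℝ F] [Module ℝ G]
    (B : E →ₗ[ℝ] F →ₗ[ℝ] G) {T : ℕ} (hT : 0 < T) {V : ℕ → E} {W : ℕ → F}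
    (hV : ∑ i ∈ Icc 1 T, V i = 0) (hW : ∑ j ∈ Icc 1 T, W j = 0) :
    (T : ℝ)⁻¹ • ∑ i ∈ Icc 1 T, ∑ j ∈ Icc 1 T,
        bartlettKernel (((i : ℝ) - (j : ℝ)) / T) • B (V i) (W j)
      = (2 * ((T : ℝ) ^ 2)⁻¹) •
        ∑ t ∈ Icc 1 (T - 1), B (∑ i ∈ Icc 1 t, V i) (∑ j ∈ Icc 1 t, W j) := by
  have kernel_smul : ∀ i ∈ Icc 1 T, ∀ j ∈ Icc 1 T,
      bartlettKernel (((i : ℝ) - j) / T) • B (V i) (W j)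
        = (2 * (T : ℝ)⁻¹) • (T - max i j) • B (V i) (W j)
          + (((i : ℝ) / T - 1) + j / T) • B (V i) (W j) := fun i hi j hj => by
    have hiT : i ≤ T := (mem_Icc.mp hi).2
    have hjT : j ≤ T := (mem_Icc.mp hj).2
    have lag_le : |(i : ℝ) - j| ≤ T :=
      abs_sub_le_of_nonneg_of_le i.cast_nonneg (mod_cast hiT) j.cast_nonneg (mod_cast hjT)
    rw [bartlettKernel_sub_div_eq_sub_max (mod_cast hT) lag_le, ← Nat.cast_max,
      ← Nat.cast_sub (max_le hiT hjT), add_smul, mul_smul, Nat.cast_smul_eq_nsmul]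
  calc (T : ℝ)⁻¹ • ∑ i ∈ Icc 1 T, ∑ j ∈ Icc 1 T,
        bartlettKernel (((i : ℝ) - (j : ℝ)) / T) • B (V i) (W j)
      = (T : ℝ)⁻¹ • (2 * (T : ℝ)⁻¹) •
          ∑ i ∈ Icc 1 T, ∑ j ∈ Icc 1 T, (T - max i j) • B (V i) (W j) := by
        rw [sum_congr rfl fun i hi => sum_congr rfl (kernel_smul i hi)]
        simp only [sum_add_distrib, ← smul_sum]
        rw [sum_sum_add_smul_eq_zero B hV hW (fun i => (i : ℝ) / T - 1) (fun j => (j : ℝ) / T),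
          add_zero]
    _ = (2 * ((T : ℝ) ^ 2)⁻¹) •
          ∑ t ∈ Icc 1 (T - 1), B (∑ i ∈ Icc 1 t, V i) (∑ j ∈ Icc 1 t, W j) := by
        rw [sum_sum_sub_max_nsmul_eq_sum_partial_sums, smul_smul]
        ring_nf

/-- **Bartlett fixed-b LRV estimator as an average of outer products of partial sums.**
If the partial sums `Ŝ t = ∑_{j=1}^t V̂ j` satisfy `Ŝ T = 0`, then
`T⁻¹ ∑_{i=1}^T ∑_{j=1}^T K_BT((i−j)/T) V̂ᵢ V̂ⱼ' = 2 T⁻² ∑_{i=1}^{T−1} Ŝᵢ Ŝᵢ'`. -/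
theorem bartlett_fixed_b_eq_sum_outer_partial_sums
    (T p : ℕ) (hT : 2 ≤ T) (hp : 1 ≤ p) (V : ℕ → Fin p → ℝ)
    (S : ℕ → Fin p → ℝ) (hS : ∀ t, S t = ∑ j ∈ Icc 1 t, V j)
    (hST : S T = 0) :
    (T : ℝ)⁻¹ • ∑ i ∈ Icc 1 T, ∑ j ∈ Icc 1 T,
        bartlettKernel (((i : ℝ) - (j : ℝ)) / T) • Matrix.vecMulVec (V i) (V j)
      = (2 * ((T : ℝ) ^ 2)⁻¹) • ∑ i ∈ Icc 1 (T - 1), Matrix.vecMulVec (S i) (S i) := by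
  obtain rfl : S = fun t => ∑ j ∈ Icc 1 t, V j := funext hS
  exact bartlett_fixed_b_eq_sum_outer_partial_sums_general (vecMulVecBilin ℝ ℝ)
    (Nat.zero_lt_of_lt hT) hST hST
end

section
/- Let G : [0,1]² → ℝ be continuous with |G(r,s)| ≤ 2 for all r, s ∈ [0,1]. Then for every integer m ≥ 1, using the cyclic convention τ_{m+1} = τ₁, | ∫_{[0,1]^m} ∏_{j=1}^m G(τ_j, τ_{j+1}) dτ₁ ⋯ dτ_m | ≤ 2 ( sup_{s ∈ [0,1]} ∫₀¹ |G(r,s)| dr )^{m−1}. -/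
open MeasureTheory intervalIntegral

open scoped ENNReal NNReal

/-! Bounding the closing factor `G(τ_m, τ₁)` by its supremum cuts the cycle open into a chain. In
the chain `τ₁` occurs only in `G(τ₁, τ₂)`, so integrating out `τ₁, τ₂, …` in turn costs one column
integral per link. -/

lemma lintegral_pi_fin_succ_le {n : ℕ} {α : Fin (n + 1) → Type*} [∀ i, MeasurableSpace (α i)]
    (μ : ∀ i, Measure (α i)) [∀ i, SigmaFinite (μ i)] (f : (∀ i, α i) → ℝ≥0∞) :
    ∫⁻ τ, f τ ∂Measure.pi μ
      ≤ ∫⁻ τ, ∫⁻ r, f (Fin.cons r τ) ∂μ 0 ∂Measure.pi fun i : Fin n => μ i.succ := by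
  let e : ((∀ i : Fin n, α i.succ) × α 0) ≃ᵐ ∀ i, α i :=
    MeasurableEquiv.prodComm.trans (MeasurableEquiv.piFinSuccAbove α 0).symm
  have he : MeasurePreserving e ((Measure.pi fun i : Fin n => μ i.succ).prod (μ 0))
      (Measure.pi μ) :=
    (measurePreserving_piFinSuccAbove μ 0).symm.comp Measure.measurePreserving_swap
  have he_cons (p : (∀ i : Fin n, α i.succ) × α 0) : e p = Fin.cons p.2 p.1 :=
    Fin.insertNth_zero p.2 p.1
  calc ∫⁻ τ, f τ ∂Measure.pi μ
      = ∫⁻ p, f (Fin.cons p.2 p.1) ∂(Measure.pi fun i : Fin n => μ i.succ).prod (μ 0) := by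
        simp only [he.lintegral_map_equiv, he_cons]
    _ ≤ _ := lintegral_prod_le _

section Kernel

variable {α : Type*} [MeasurableSpace α] {μ : Measure α} [SigmaFinite μ]

-- `F` is finite-valued so that factors can be pulled out of the lower integral `∫⁻`.
lemma lintegral_prod_chain_le {F : α → α → ℝ≥0} {C : ℝ≥0}
    (hC : ∀ᵐ t ∂μ, ∫⁻ r, F r t ∂μ ≤ C) (n : ℕ) :
    ∫⁻ τ : Fin (n + 1) → α, ∏ i : Fin n, (F (τ i.castSucc) (τ i.succ) : ℝ≥0∞)
        ∂Measure.pi (fun _ => μ)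
      ≤ C ^ n * μ Set.univ := by
  induction n with
  | zero => simp [Measure.pi_univ]
  | succ n ih =>
    let P (τ : Fin (n + 1) → α) : ℝ≥0∞ := ∏ i : Fin n, (F (τ i.castSucc) (τ i.succ) : ℝ≥0∞)
    have hP (τ : Fin (n + 1) → α) : P τ ≠ ∞ := ENNReal.prod_ne_top fun _ _ => ENNReal.coe_ne_top
    have hC_head : ∀ᵐ τ : Fin (n + 1) → α ∂Measure.pi (fun _ => μ),
        ∫⁻ r, F r (τ 0) ∂μ ≤ C :=
      (Measure.tendsto_eval_ae_ae (μ := fun _ : Fin (n + 1) => μ) (i := 0)).eventually hC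
    calc ∫⁻ τ : Fin (n + 2) → α, ∏ i : Fin (n + 1), (F (τ i.castSucc) (τ i.succ) : ℝ≥0∞)
          ∂Measure.pi (fun _ => μ)
        ≤ ∫⁻ τ : Fin (n + 1) → α, ∫⁻ r, F r (τ 0) * P τ ∂μ ∂Measure.pi (fun _ => μ) := by
          refine (lintegral_pi_fin_succ_le _ _).trans_eq ?_
          simp [P, Fin.prod_univ_succ (n := n)]
      _ = ∫⁻ τ : Fin (n + 1) → α, (∫⁻ r, F r (τ 0) ∂μ) * P τ ∂Measure.pi (fun _ => μ) :=
          lintegral_congr fun τ => lintegral_mul_const' _ _ (hP τ)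
      _ ≤ ∫⁻ τ : Fin (n + 1) → α, C * P τ ∂Measure.pi (fun _ => μ) :=
          lintegral_mono_ae (hC_head.mono fun τ hτ => by gcongr)
      _ = C * ∫⁻ τ : Fin (n + 1) → α, P τ ∂Measure.pi (fun _ => μ) :=
          lintegral_const_mul' _ _ ENNReal.coe_ne_top
      _ ≤ C * (C ^ n * μ Set.univ) := by gcongr
      _ = C ^ (n + 1) * μ Set.univ := by rw [pow_succ', mul_assoc]

lemma setLIntegral_prod_cycle_le {s : Set α} (hs : MeasurableSet s) {F : α → α → ℝ≥0}
    {B C : ℝ≥0} (hB : ∀ r ∈ s, ∀ t ∈ s, F r t ≤ B) (hC : ∀ t ∈ s, ∫⁻ r in s, F r t ∂μ ≤ C)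
    (n : ℕ) :
    ∫⁻ τ : Fin (n + 1) → α in Set.univ.pi fun _ => s, ∏ j, (F (τ j) (τ (j + 1)) : ℝ≥0∞)
        ∂Measure.pi (fun _ => μ)
      ≤ B * (C ^ n * μ s) := by
  calc ∫⁻ τ : Fin (n + 1) → α in Set.univ.pi fun _ => s, ∏ j, (F (τ j) (τ (j + 1)) : ℝ≥0∞)
        ∂Measure.pi (fun _ => μ)
      ≤ ∫⁻ τ : Fin (n + 1) → α in Set.univ.pi fun _ => s,
          B * ∏ i : Fin n, (F (τ i.castSucc) (τ i.succ) : ℝ≥0∞) ∂Measure.pi (fun _ => μ) := by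
        refine setLIntegral_mono' (.univ_pi fun _ => hs) fun τ hτ => ?_
        rw [Fin.prod_univ_castSucc, mul_comm]
        simp only [Fin.coeSucc_eq_succ]
        gcongr
        exact hB _ (hτ _ trivial) _ (hτ _ trivial)
    _ = B * ∫⁻ τ : Fin (n + 1) → α, ∏ i : Fin n, (F (τ i.castSucc) (τ i.succ) : ℝ≥0∞)
          ∂Measure.pi (fun _ => μ.restrict s) := by
        rw [lintegral_const_mul' _ _ ENNReal.coe_ne_top, Measure.restrict_pi_pi]
    _ ≤ B * (C ^ n * μ s) := by
        gcongr
        simpa using lintegral_prod_chain_le (ae_restrict_of_forall_mem hs hC) n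

lemma norm_setIntegral_prod_cycle_le {A : Type*} [NormedCommRing A] [NormedSpace ℝ A] {s : Set α}
    (hs : MeasurableSet s) (hμs : μ s ≠ ∞) {G : α → α → A} {B C : ℝ≥0}
    (hB : ∀ r ∈ s, ∀ t ∈ s, ‖G r t‖ ≤ B) (hC : ∀ t ∈ s, ∫⁻ r in s, ‖G r t‖ₑ ∂μ ≤ C) (n : ℕ) :
    ‖∫ τ : Fin (n + 1) → α in Set.univ.pi fun _ => s, ∏ j, G (τ j) (τ (j + 1))
        ∂Measure.pi (fun _ => μ)‖
      ≤ B * μ.real s * C ^ n := by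
  have hprod (τ : Fin (n + 1) → α) :
      ‖∏ j, G (τ j) (τ (j + 1))‖ₑ ≤ ∏ j, ‖G (τ j) (τ (j + 1))‖ₑ := by
    simp only [enorm_eq_nnnorm]
    exact_mod_cast Finset.nnnorm_prod_le' _ Finset.univ_nonempty _
  have henorm : ‖∫ τ : Fin (n + 1) → α in Set.univ.pi fun _ => s, ∏ j, G (τ j) (τ (j + 1))
      ∂Measure.pi (fun _ => μ)‖ₑ ≤ B * (C ^ n * μ s) :=
    (enorm_integral_le_lintegral_enorm _).trans <| (lintegral_mono hprod).trans <|
      setLIntegral_prod_cycle_le hs hB hC n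
  calc _ ≤ (B * (C ^ n * μ s)).toReal := by
        simpa only [toReal_enorm] using ENNReal.toReal_mono (by finiteness) henorm
    _ = B * μ.real s * C ^ n := by
        simp only [ENNReal.toReal_mul, ENNReal.toReal_pow, ENNReal.coe_toReal, measureReal_def]
        ring

end Kernel

lemma aestronglyMeasurable_restrict_of_stronglyMeasurable_domRestrict {α β : Type*}
    [MeasurableSpace α] {μ : Measure α} [TopologicalSpace β] {s : Set α} (hs : MeasurableSet s)
    {f : α → β} (hf : StronglyMeasurable (s.domRestrict f)) :
    AEStronglyMeasurable f (μ.restrict s) := by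
  rw [← map_comap_subtype_coe hs, (MeasurableEmbedding.subtype_coe hs).aestronglyMeasurable_map_iff]
  exact hf.aestronglyMeasurable

theorem cyclic_product_integral_bound_general {α 𝕜 : Type*} [MeasurableSpace α] {μ : Measure α}
    [SigmaFinite μ] [RCLike 𝕜] (m : ℕ) [NeZero m] {s : Set α}
    (hs : MeasurableSet s) (hμs : μ s ≠ ∞) (G : α → α → 𝕜)
    (hG : StronglyMeasurable ((s ×ˢ s).domRestrict fun p : α × α => G p.1 p.2)) {B : ℝ≥0}
    (hB : ∀ r ∈ s, ∀ t ∈ s, ‖G r t‖ ≤ B) :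
    ‖∫ τ : Fin m → α in Set.univ.pi (fun _ => s), ∏ j : Fin m, G (τ j) (τ (j + 1))
        ∂Measure.pi (fun _ => μ)‖
      ≤ B * μ.real s * (sSup ((fun t => ∫ r in s, ‖G r t‖ ∂μ) '' s)) ^ (m - 1) := by
  obtain ⟨n, rfl⟩ := Nat.exists_eq_succ_of_ne_zero (NeZero.ne m)
  set S := sSup ((fun t => ∫ r in s, ‖G r t‖ ∂μ) '' s)
  have hS : 0 ≤ S := Real.sSup_nonneg <| Set.forall_mem_image.2 fun t _ =>
    integral_nonneg fun r => norm_nonneg (G r t)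
  have hbdd : BddAbove ((fun t => ∫ r in s, ‖G r t‖ ∂μ) '' s) := by
    refine ⟨B * μ.real s, Set.forall_mem_image.2 fun t ht => ?_⟩
    exact (Real.le_norm_self _).trans <| norm_setIntegral_le_of_norm_le_const hμs.lt_top
      fun r hr => (norm_norm _).trans_le (hB r hr t ht)
  have hcol (t : α) (ht : t ∈ s) : ∫⁻ r in s, ‖G r t‖ₑ ∂μ ≤ S.toNNReal := by
    have hmeas : StronglyMeasurable (s.domRestrict fun r => G r t) :=
      hG.comp_measurable (g := fun r : s => (⟨(r, t), r.2, ht⟩ : s ×ˢ s)) (by fun_prop)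
    have hint : IntegrableOn (fun r => G r t) s μ :=
      .of_bound hμs.lt_top
        (aestronglyMeasurable_restrict_of_stronglyMeasurable_domRestrict hs hmeas) B
        (ae_restrict_of_forall_mem hs fun r hr => hB r hr t ht)
    rw [← ofReal_integral_norm_eq_lintegral_enorm hint]
    exact ENNReal.ofReal_le_ofReal (le_csSup hbdd ⟨t, ht, rfl⟩)
  simpa only [Real.coe_toNNReal S hS, Nat.succ_eq_add_one, Nat.add_sub_cancel] using
    norm_setIntegral_prod_cycle_le hs hμs hB hcol n

/-- **Cyclic-product integral bound.** For a continuous `G : [0,1]² → ℝ` bounded by `2`,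
with the cyclic convention `τ_{m+1} = τ₁`,
`|∫_{[0,1]^m} ∏_{j=1}^m G(τ_j, τ_{j+1}) dτ| ≤ 2 (sup_{s ∈ [0,1]} ∫₀¹ |G(r,s)| dr)^{m−1}`. -/
theorem cyclic_product_integral_bound
    (m : ℕ) [NeZero m] (G : ℝ → ℝ → ℝ)
    (hGcont : ContinuousOn (fun p : ℝ × ℝ => G p.1 p.2)
      (Set.Icc (0:ℝ) 1 ×ˢ Set.Icc (0:ℝ) 1))
    (hGbd : ∀ r ∈ Set.Icc (0:ℝ) 1, ∀ s ∈ Set.Icc (0:ℝ) 1, |G r s| ≤ 2) :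
    |∫ τ : Fin m → ℝ in Set.univ.pi (fun _ => Set.Icc (0:ℝ) 1),
        ∏ j : Fin m, G (τ j) (τ (j + 1))|
      ≤ 2 * (sSup ((fun s => ∫ r in (0:ℝ)..1, |G r s|) '' Set.Icc (0:ℝ) 1)) ^ (m - 1) := by
  simpa [integral_of_le, ← integral_Icc_eq_integral_Ioc, volume_pi] using
    cyclic_product_integral_bound_general (μ := volume) m measurableSet_Icc (by simp) G
      hGcont.domRestrict.stronglyMeasurable (B := 2) hGbd
end

section
/- Let Ω > 0, C_Ω ≥ 0, C̄₁ ≥ 0 and b > 0 with C̄₁ b ≤ 1. Let (κ_j)_{j ≥ 1} be real numbers with κ₁ = 0 and |κ_j| ≤ 2^j (j−1)! Ω^{−j} C_Ω^j (C̄₁ b)^{j−1} for all j ≥ 2. For each integer m ≥ 2 define Ξ_m by the moments-from-cumulants partition formula Ξ_m = Σ_π [ m! / ( (j₁!)^{m₁} ⋯ (j_l!)^{m_l} · m₁! ⋯ m_l! ) ] ∏_{i=1}^l κ_{j_i}^{m_i}, where the sum runs over all integer partitions π of m having distinct part sizes j₁ > ⋯ > j_l with multiplicities m₁, …, m_l.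 Then |Ξ_m| ≤ 2^{2m} m! Ω^{−m} C_Ω^m (C̄₁ b)^{⌈m/2⌉}. -/
open Finset

/-!
Writing a moment as a sum over partitions weighted by the numbers `Multiset.bell` of set partitions
of each type, a growth bound `‖κ k‖ ≤ k! * c k` passes from the cumulants to each summand of the
`m`-th moment, in the form `m! * c m`, as soon as `c j * c k ≤ c (j + k)`: the product of the `k!`
cancels against the denominator of the Bell number. The cumulant bound with exponent `k - 1` has
this form for `c k = r ^ k * a ^ ⌈k / 2⌉`, because `κ 1 = 0` and `⌈k / 2⌉ ≤ k - 1` for `k ≥ 2`, and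
this `c` is supermultiplicative because `⌈· / 2⌉` is subadditive and `a ≤ 1`.
-/

open scoped Nat

theorem prod_map_le_apply_sum_of_supermultiplicative {M R : Type*} [AddCommMonoid M]
    [CommMonoidWithZero R] [PartialOrder R] [PosMulMono R] {c : M → R}
    (hc_nonneg : ∀ x, 0 ≤ c x) (hc_zero : 1 ≤ c 0)
    (hc_add : ∀ x y, c x * c y ≤ c (x + y)) (s : Multiset M) :
    (s.map c).prod ≤ c s.sum := by
  induction s using Multiset.induction_on with
  | empty => simpa
  | cons x s ih =>
    simp only [Multiset.map_cons, Multiset.prod_cons, Multiset.sum_cons]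
    exact (mul_le_mul_of_nonneg_left ih (hc_nonneg x)).trans (hc_add x s.sum)

theorem bell_mul_prod_factorial_le (s : Multiset ℕ) :
    s.bell * (s.map (· !)).prod ≤ s.sum ! := by
  rw [← s.bell_mul_eq]
  exact Nat.le_mul_of_pos_right _ (by positivity)

theorem cast_bell_eq_factorial_div (K : Type*) [Semifield K] [CharZero K]
    {s : Multiset ℕ} (hs : 0 ∉ s) :
    (s.bell : K) = s.sum ! / ∏ k ∈ s.toFinset, (k ! : K) ^ s.count k * (s.count k)! := by
  have hprod : (∏ k ∈ s.toFinset, (k ! : K) ^ s.count k * (s.count k)!) ≠ 0 :=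
    prod_ne_zero_iff.2 fun k _ => mul_ne_zero
      (pow_ne_zero _ (Nat.cast_ne_zero.2 k.factorial_ne_zero))
      (Nat.cast_ne_zero.2 (Nat.factorial_ne_zero _))
  rw [eq_div_iff hprod, ← s.bell_mul_eq, erase_eq_of_notMem (by simpa using hs),
    prod_multiset_map_count, mul_assoc, ← prod_mul_distrib]
  push_cast
  rfl

theorem norm_bell_nsmul_prod_map_le {A : Type*} [SeminormedCommRing A] [NormOneClass A]
    {κ : ℕ → A} {c : ℕ → ℝ} (hc_nonneg : ∀ k, 0 ≤ c k) (hc_zero : 1 ≤ c 0)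
    (hc_add : ∀ j k, c j * c k ≤ c (j + k)) {s : Multiset ℕ}
    (hκ : ∀ k ∈ s, ‖κ k‖ ≤ k ! * c k) :
    ‖s.bell • (s.map κ).prod‖ ≤ s.sum ! * c s.sum := by
  have hκ_prod : ‖(s.map κ).prod‖ ≤ (s.map fun k => (k ! : ℝ)).prod * (s.map c).prod := by
    rw [← Multiset.prod_map_mul]
    calc ‖(s.map κ).prod‖
        ≤ (s.map fun k => ‖κ k‖).prod := by
          simpa using Multiset.le_prod_of_submultiplicative_of_nonneg (norm : A → ℝ)
            norm_nonneg norm_one.le norm_mul_le (s.map κ)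
      _ ≤ (s.map fun k => k ! * c k).prod :=
          Multiset.prod_map_le_prod_map₀ _ _ (fun k _ => norm_nonneg (κ k)) hκ
  calc ‖s.bell • (s.map κ).prod‖
      ≤ s.bell * ‖(s.map κ).prod‖ := norm_nsmul_le
    _ ≤ s.bell * ((s.map fun k => (k ! : ℝ)).prod * (s.map c).prod) := by gcongr
    _ = (s.bell * (s.map (· !)).prod : ℕ) * (s.map c).prod := by
        push_cast [Multiset.map_map]
        simp only [mul_assoc, Function.comp_def]
    _ ≤ s.sum ! * c s.sum := by
        gcongr
        · exact Multiset.prod_map_nonneg fun k _ => hc_nonneg k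
        · exact bell_mul_prod_factorial_le s
        · exact prod_map_le_apply_sum_of_supermultiplicative hc_nonneg hc_zero hc_add s

/-- The `m`-th moment of a (possibly only formal) random variable with cumulants `κ`: the sum over
the partitions of an `m`-element set of the product of the cumulants of the block sizes, grouped by
the integer partition that the block sizes form. -/
def momentOfCumulants {A : Type*} [CommSemiring A] (κ : ℕ → A) (m : ℕ) : A :=
  ∑ π : Nat.Partition m, π.parts.bell • (π.parts.map κ).prod

theorem momentOfCumulants_eq_sum_factorial_div {K : Type*} [Semifield K] [CharZero K]
    (κ : ℕ → K) (m : ℕ) :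
    momentOfCumulants κ m = ∑ π : Nat.Partition m,
      ((m ! : K) / ∏ k ∈ π.parts.toFinset, (k ! : K) ^ π.parts.count k * (π.parts.count k)!) *
        ∏ k ∈ π.parts.toFinset, κ k ^ π.parts.count k := by
  refine sum_congr rfl fun π _ => ?_
  rw [nsmul_eq_mul, cast_bell_eq_factorial_div K fun h => (π.parts_pos h).false,
    π.parts_sum, prod_multiset_map_count]

theorem card_partition_le_two_pow_sub_one (n : ℕ) :
    Fintype.card (Nat.Partition n) ≤ 2 ^ (n - 1) :=
  composition_card n ▸ Fintype.card_le_of_surjective _ Nat.Partition.ofComposition_surj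

section Bounds

variable {A : Type*} [SeminormedCommRing A] [NormOneClass A] {κ : ℕ → A}

theorem norm_momentOfCumulants_le_card_mul {c : ℕ → ℝ} (hc_nonneg : ∀ k, 0 ≤ c k)
    (hc_zero : 1 ≤ c 0) (hc_add : ∀ j k, c j * c k ≤ c (j + k))
    (hκ : ∀ k, 0 < k → ‖κ k‖ ≤ k ! * c k) (m : ℕ) :
    ‖momentOfCumulants κ m‖ ≤ Fintype.card (Nat.Partition m) * (m ! * c m) := by
  have hterm (π : Nat.Partition m) : ‖π.parts.bell • (π.parts.map κ).prod‖ ≤ m ! * c m := by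
    simpa only [π.parts_sum] using norm_bell_nsmul_prod_map_le hc_nonneg hc_zero hc_add
      fun k hk => hκ k (π.parts_pos hk)
  calc ‖momentOfCumulants κ m‖
      ≤ ∑ _π : Nat.Partition m, m ! * c m := norm_sum_le_of_le univ fun π _ => hterm π
    _ = Fintype.card (Nat.Partition m) * (m ! * c m) := by
        rw [sum_const, nsmul_eq_mul, card_univ]

theorem pow_mul_pow_ceil_half_mul_le {r a : ℝ} (hr : 0 ≤ r) (ha : 0 ≤ a) (ha1 : a ≤ 1) (j k : ℕ) :
    r ^ j * a ^ ((j + 1) / 2) * (r ^ k * a ^ ((k + 1) / 2)) ≤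
      r ^ (j + k) * a ^ ((j + k + 1) / 2) := by
  have hexp : (j + k + 1) / 2 ≤ (j + 1) / 2 + (k + 1) / 2 := by omega
  calc r ^ j * a ^ ((j + 1) / 2) * (r ^ k * a ^ ((k + 1) / 2))
      = r ^ (j + k) * a ^ ((j + 1) / 2 + (k + 1) / 2) := by ring
    _ ≤ r ^ (j + k) * a ^ ((j + k + 1) / 2) := by
        gcongr ?_ * ?_
        exact pow_le_pow_of_le_one ha ha1 hexp

theorem norm_momentOfCumulants_le {r a : ℝ} (hr : 0 ≤ r) (ha : 0 ≤ a) (ha1 : a ≤ 1)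
    (hκ1 : κ 1 = 0) (hκ : ∀ k, 2 ≤ k → ‖κ k‖ ≤ k ! * (r ^ k * a ^ (k - 1))) (m : ℕ) :
    ‖momentOfCumulants κ m‖ ≤ 2 ^ (m - 1) * (m ! * (r ^ m * a ^ ((m + 1) / 2))) := by
  have hκ_ceil_half (k : ℕ) (hk : 0 < k) : ‖κ k‖ ≤ k ! * (r ^ k * a ^ ((k + 1) / 2)) := by
    obtain rfl | hk2 : k = 1 ∨ 2 ≤ k := by omega
    · rw [hκ1, norm_zero]
      positivity
    · refine (hκ k hk2).trans ?_
      gcongr _ * (_ * ?_)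
      exact pow_le_pow_of_le_one ha ha1 (by omega)
  calc ‖momentOfCumulants κ m‖
      ≤ Fintype.card (Nat.Partition m) * (m ! * (r ^ m * a ^ ((m + 1) / 2))) :=
        norm_momentOfCumulants_le_card_mul (c := fun k => r ^ k * a ^ ((k + 1) / 2))
          (fun k => by positivity) (by simp) (pow_mul_pow_ceil_half_mul_le hr ha ha1)
          hκ_ceil_half m
    _ ≤ 2 ^ (m - 1) * (m ! * (r ^ m * a ^ ((m + 1) / 2))) := by
        gcongr
        exact_mod_cast card_partition_le_two_pow_sub_one m

theorem moment_bound_from_cumulant_bounds_general {Ω CΩ a : ℝ} (hΩ : 0 < Ω) (hCΩ : 0 ≤ CΩ)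
    (ha : 0 ≤ a) (ha1 : a ≤ 1) (hκ1 : κ 1 = 0)
    (hκ : ∀ j, 2 ≤ j → ‖κ j‖ ≤ 2 ^ j * ((j - 1)! : ℝ) * Ω ^ (-(j : ℤ)) * CΩ ^ j * a ^ (j - 1))
    (m : ℕ) :
    ‖momentOfCumulants κ m‖ ≤
      2 ^ (2 * m) * (m ! : ℝ) * Ω ^ (-(m : ℤ)) * CΩ ^ m * a ^ ((m + 1) / 2) := by
  have hpow (k : ℕ) : (2 * CΩ / Ω) ^ k = 2 ^ k * Ω ^ (-(k : ℤ)) * CΩ ^ k := by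
    rw [div_pow, mul_pow, zpow_neg, zpow_natCast]
    ring
  have hκ_ratio (k : ℕ) (hk : 2 ≤ k) : ‖κ k‖ ≤ k ! * ((2 * CΩ / Ω) ^ k * a ^ (k - 1)) :=
    calc ‖κ k‖ ≤ (k - 1)! * ((2 * CΩ / Ω) ^ k * a ^ (k - 1)) :=
          (hκ k hk).trans_eq (by rw [hpow]; ring)
      _ ≤ k ! * ((2 * CΩ / Ω) ^ k * a ^ (k - 1)) := by
          gcongr
          exact Nat.sub_le k 1
  calc ‖momentOfCumulants κ m‖
      ≤ 2 ^ (m - 1) * (m ! * ((2 * CΩ / Ω) ^ m * a ^ ((m + 1) / 2))) :=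
        norm_momentOfCumulants_le (by positivity) ha ha1 hκ1 hκ_ratio m
    _ ≤ 2 ^ m * (m ! * ((2 * CΩ / Ω) ^ m * a ^ ((m + 1) / 2))) := by
        gcongr
        · exact one_le_two
        · exact Nat.sub_le m 1
    _ = 2 ^ (2 * m) * (m ! : ℝ) * Ω ^ (-(m : ℤ)) * CΩ ^ m * a ^ ((m + 1) / 2) := by
        rw [hpow]
        ring

end Bounds

/-- **Moment bound from cumulant bounds via the moments-from-cumulants partition formula.**
If `κ₁ = 0` and `|κ_j| ≤ 2^j (j−1)! Ω^{−j} C_Ω^j (C̄₁ b)^{j−1}` for `j ≥ 2`, and for `m ≥ 2`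
`Ξ_m = ∑_π [m! / (∏_k (k!)^{m_k(π)} m_k(π)!)] ∏_k κ_k^{m_k(π)}` (sum over integer
partitions `π` of `m`, `m_k(π)` the multiplicity of the part `k`), then
`|Ξ_m| ≤ 2^{2m} m! Ω^{−m} C_Ω^m (C̄₁ b)^{⌈m/2⌉}`. -/
theorem moment_bound_from_cumulant_bounds
    (Ω CΩ C₁ b : ℝ) (hΩ : 0 < Ω) (hCΩ : 0 ≤ CΩ) (hC₁ : 0 ≤ C₁) (hb : 0 < b)
    (hC₁b : C₁ * b ≤ 1)
    (κ : ℕ → ℝ) (hκ1 : κ 1 = 0)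
    (hκ : ∀ j, 2 ≤ j →
      |κ j| ≤ 2 ^ j * (Nat.factorial (j - 1) : ℝ) * Ω ^ (-(j:ℤ)) * CΩ ^ j
        * (C₁ * b) ^ (j - 1))
    (Ξ : ℕ → ℝ)
    (hΞ : ∀ m, 2 ≤ m → Ξ m
      = ∑ π : Nat.Partition m,
          ((Nat.factorial m : ℝ) /
              (∏ k ∈ π.parts.toFinset,
                (Nat.factorial k : ℝ) ^ (π.parts.count k)
                  * (Nat.factorial (π.parts.count k) : ℝ)))
            * ∏ k ∈ π.parts.toFinset, κ k ^ (π.parts.count k)) :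
    ∀ m, 2 ≤ m →
      |Ξ m| ≤ 2 ^ (2 * m) * (Nat.factorial m : ℝ) * Ω ^ (-(m:ℤ)) * CΩ ^ m
        * (C₁ * b) ^ ((m + 1) / 2) := by
  intro m hm
  rw [hΞ m hm, ← momentOfCumulants_eq_sum_factorial_div, ← Real.norm_eq_abs]
  exact moment_bound_from_cumulant_bounds_general hΩ hCΩ (mul_nonneg hC₁ hb.le) hC₁b hκ1 hκ m
end
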